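/- Let X₀ and X₁ be nonnegative random variables with equal finite positive mean a = E[X₀] = E[X₁]. Define F₀(λ) = E[e^{-λẊ₀}]/E[e^{-λX₀}] and F₁(λ) = E[e^{-λẊ₁}]/E[e^{-λX₁}], where Ẋᵢ is the Xᵢ-size-biased transform of Xᵢ. Then for all λ ≥ 0, |E[e^{-λX₀}] - E[e^{-λX₁}]| ≤ a ∫₀^λ |F₀(s) - F₁(s)| ds. -/

import Mathlib

open MeasureTheory ProbabilityTheory

/-- The law of the `X`-size-biased transform of a random variable with law `μ`
and mean `a`: `dν(x) = x dμ(x) / a`. -/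
noncomputable def sizeBiasedLaw (μ : Measure ℝ) (a : ℝ) : Measure ℝ :=
  (ENNReal.ofReal a)⁻¹ • μ.withDensity (fun x => ENNReal.ofReal x)

open Set

/-!
Write `K(t) = log E[e^{tX}]` for the cumulant generating function of `X ≥ 0`. The size-biased ratio
is its derivative, `E[X] F(s) = K'(-s)`, so integrating over `[0, l]` gives
`K(-l) = -E[X] ∫₀ˡ F(s) ds`. Since `K(-l) ≤ 0` and `exp` is `1`-Lipschitz on `(-∞, 0]`, two Laplace
transforms `exp (K(-l))` are no further apart than their exponents. The function `F` is nonnegative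
and is a derivative on `(0, l)`, which already makes it integrable.
-/

/-- The ratio `F(s) = E[e^{-sẊ}] / E[e^{-sX}]` of the Laplace transforms of the size-biased
transform `Ẋ` and of `X` itself, whose mean normalizes the law of `Ẋ`; the denominator is the moment
generating function at `-s`. -/
noncomputable def sizeBiasedRatio {Ω : Type*} [MeasurableSpace Ω] (X : Ω → ℝ) (P : Measure Ω)
    (s : ℝ) : ℝ :=
  (∫ x, Real.exp (-s * x) ∂(sizeBiasedLaw (P.map X) P[X])) / mgf X P (-s)

theorem abs_exp_sub_exp_le {x y c : ℝ} (hx : x ≤ c) (hy : y ≤ c) :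
    |Real.exp x - Real.exp y| ≤ Real.exp c * |x - y| := by
  refine (convex_Iic c).norm_image_sub_le_of_norm_deriv_le
    (fun z _ => Real.differentiableAt_exp) (fun z hz => ?_) hy hx
  rw [Real.deriv_exp, Real.norm_of_nonneg (Real.exp_pos z).le]
  exact Real.exp_le_exp.2 hz

theorem integral_sizeBiasedLaw {E : Type*} [NormedAddCommGroup E] [NormedSpace ℝ E]
    {μ : Measure ℝ} (hμ : ∀ᵐ x ∂μ, 0 ≤ x) {a : ℝ} (ha : 0 ≤ a) (f : ℝ → E) :
    ∫ x, f x ∂(sizeBiasedLaw μ a) = a⁻¹ • ∫ x, x • f x ∂μ := by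
  rw [sizeBiasedLaw, integral_smul_measure, ENNReal.toReal_inv, ENNReal.toReal_ofReal ha,
    integral_withDensity_eq_integral_toReal_smul ENNReal.measurable_ofReal
      (.of_forall fun _ => ENNReal.ofReal_lt_top)]
  congr 1
  refine integral_congr_ae ?_
  filter_upwards [hμ] with x hx
  rw [ENNReal.toReal_ofReal hx]

section Nonneg

variable {Ω : Type*} [MeasurableSpace Ω] {P : Measure Ω} {X : Ω → ℝ}

theorem cgf_nonpos_of_nonpos [IsProbabilityMeasure P] (hX_nonneg : 0 ≤ᵐ[P] X) {t : ℝ}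
    (ht : t ≤ 0) : cgf X P t ≤ 0 := by
  refine Real.log_nonpos mgf_nonneg ?_
  simpa using mgf_anti_of_nonpos hX_nonneg ht (by simp)

theorem deriv_cgf_nonneg (hX_nonneg : 0 ≤ᵐ[P] X) {t : ℝ}
    (ht : t ∈ interior (integrableExpSet X P)) : 0 ≤ deriv (cgf X P) t := by
  rw [deriv_cgf ht]
  refine div_nonneg (integral_nonneg_of_ae ?_) mgf_nonneg
  filter_upwards [hX_nonneg] with ω hω using mul_nonneg hω (Real.exp_pos _).le

variable [IsFiniteMeasure P]

theorem Iic_zero_subset_integrableExpSet (hX : AEMeasurable X P)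
    (hX_nonneg : 0 ≤ᵐ[P] X) : Iic 0 ⊆ integrableExpSet X P := fun t ht => by
  have h := integrable_exp_mul_of_le (-t) 0 (neg_nonneg.2 ht) hX.neg
    (hX_nonneg.mono fun ω hω => neg_nonpos.2 hω)
  simpa only [integrableExpSet, mem_ofPred_eq, Pi.neg_apply, neg_mul_neg] using h

theorem Iio_zero_subset_interior_integrableExpSet (hX : AEMeasurable X P)
    (hX_nonneg : 0 ≤ᵐ[P] X) : Iio 0 ⊆ interior (integrableExpSet X P) :=
  isOpen_Iio.subset_interior_iff.2 <|
    Iio_subset_Iic_self.trans (Iic_zero_subset_integrableExpSet hX hX_nonneg)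

theorem continuousOn_mgf_Iic_zero (hX : AEMeasurable X P)
    (hX_nonneg : 0 ≤ᵐ[P] X) : ContinuousOn (mgf X P) (Iic 0) := by
  refine continuousOn_of_dominated (bound := fun _ => 1)
    (fun t _ => by fun_prop) (fun t ht => ?_) (integrable_const 1)
    (.of_forall fun ω => by fun_prop)
  filter_upwards [hX_nonneg] with ω hω
  rw [Real.norm_of_nonneg (Real.exp_pos _).le]
  exact Real.exp_le_one_iff.2 (mul_nonpos_of_nonpos_of_nonneg ht hω)

theorem continuousOn_cgf_Iic_zero (hX : AEMeasurable X P) (hX_nonneg : 0 ≤ᵐ[P] X) :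
    ContinuousOn (cgf X P) (Iic 0) := by
  rcases eq_or_ne P 0 with rfl | hP
  · rw [cgf_zero_measure]
    exact continuous_zero.continuousOn
  · exact (continuousOn_mgf_Iic_zero hX hX_nonneg).log fun _ ht =>
      (mgf_pos' hP (Iic_zero_subset_integrableExpSet hX hX_nonneg ht)).ne'

theorem differentiableAt_cgf_of_neg (hX : AEMeasurable X P) (hX_nonneg : 0 ≤ᵐ[P] X) {t : ℝ}
    (ht : t < 0) : DifferentiableAt ℝ (cgf X P) t :=
  (analyticAt_cgf (Iio_zero_subset_interior_integrableExpSet hX hX_nonneg ht)).differentiableAt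

theorem intervalIntegrable_deriv_cgf_of_nonpos (hX : AEMeasurable X P) (hX_nonneg : 0 ≤ᵐ[P] X)
    {s t : ℝ} (hs : s ≤ 0) (ht : t ≤ 0) :
    IntervalIntegrable (deriv (cgf X P)) volume s t := by
  have neg_of_mem {u : ℝ} (hu : u ∈ uIoo s t) : u < 0 := hu.2.trans_le (max_le hs ht)
  exact intervalIntegral.intervalIntegrable_deriv_of_nonneg
    ((continuousOn_cgf_Iic_zero hX hX_nonneg).mono (ordConnected_Iic.uIcc_subset hs ht))
    (fun u hu => (differentiableAt_cgf_of_neg hX hX_nonneg (neg_of_mem hu)).hasDerivAt)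
    (fun u hu => deriv_cgf_nonneg hX_nonneg
      (Iio_zero_subset_interior_integrableExpSet hX hX_nonneg (neg_of_mem hu)))

theorem integral_deriv_cgf_of_nonpos (hX : AEMeasurable X P) (hX_nonneg : 0 ≤ᵐ[P] X)
    {s t : ℝ} (hs : s ≤ 0) (ht : t ≤ 0) :
    ∫ u in s..t, deriv (cgf X P) u = cgf X P t - cgf X P s :=
  intervalIntegral.integral_deriv_eq_sub_uIoo
    ((continuousOn_cgf_Iic_zero hX hX_nonneg).mono (ordConnected_Iic.uIcc_subset hs ht))
    (fun _ hu => differentiableAt_cgf_of_neg hX hX_nonneg (hu.2.trans_le (max_le hs ht)))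
    (intervalIntegrable_deriv_cgf_of_nonpos hX hX_nonneg hs ht)

theorem integral_mul_sizeBiasedRatio_eq_deriv_cgf (hX : AEMeasurable X P) (hX_nonneg : 0 ≤ᵐ[P] X)
    (hX_pos : 0 < P[X]) {s : ℝ} (hs : 0 < s) :
    P[X] * sizeBiasedRatio X P s = deriv (cgf X P) (-s) := by
  have map_nonneg : ∀ᵐ x ∂P.map X, 0 ≤ x :=
    (ae_map_iff hX measurableSet_Ici).2 hX_nonneg
  rw [deriv_cgf (Iio_zero_subset_interior_integrableExpSet hX hX_nonneg (neg_neg_of_pos hs)),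
    sizeBiasedRatio, integral_sizeBiasedLaw map_nonneg hX_pos.le,
    integral_map hX (by fun_prop)]
  simp only [smul_eq_mul]
  rw [← mul_div_assoc, mul_inv_cancel_left₀ hX_pos.ne']

end Nonneg

section Comparison

variable {Ω₀ Ω₁ : Type*} [MeasurableSpace Ω₀] [MeasurableSpace Ω₁]
  {P₀ : Measure Ω₀} {P₁ : Measure Ω₁} [IsProbabilityMeasure P₀] [IsProbabilityMeasure P₁]
  {X₀ : Ω₀ → ℝ} {X₁ : Ω₁ → ℝ}

theorem abs_mgf_sub_mgf_le_abs_cgf_sub_cgf (hX₀ : AEMeasurable X₀ P₀) (hX₁ : AEMeasurable X₁ P₁)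
    (hX₀_nonneg : 0 ≤ᵐ[P₀] X₀) (hX₁_nonneg : 0 ≤ᵐ[P₁] X₁) {t : ℝ} (ht : t ≤ 0) :
    |mgf X₀ P₀ t - mgf X₁ P₁ t| ≤ |cgf X₀ P₀ t - cgf X₁ P₁ t| := by
  rw [← exp_cgf (Iic_zero_subset_integrableExpSet hX₀ hX₀_nonneg ht),
    ← exp_cgf (Iic_zero_subset_integrableExpSet hX₁ hX₁_nonneg ht)]
  simpa using abs_exp_sub_exp_le (cgf_nonpos_of_nonpos hX₀_nonneg ht)
    (cgf_nonpos_of_nonpos hX₁_nonneg ht)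

theorem abs_cgf_sub_cgf_le_integral_abs_deriv (hX₀ : AEMeasurable X₀ P₀)
    (hX₁ : AEMeasurable X₁ P₁) (hX₀_nonneg : 0 ≤ᵐ[P₀] X₀) (hX₁_nonneg : 0 ≤ᵐ[P₁] X₁)
    {t : ℝ} (ht : t ≤ 0) :
    |cgf X₀ P₀ t - cgf X₁ P₁ t| ≤
      ∫ u in t..0, |deriv (cgf X₀ P₀) u - deriv (cgf X₁ P₁) u| := by
  have integral_sub_eq : ∫ u in t..0, (deriv (cgf X₀ P₀) u - deriv (cgf X₁ P₁) u) =
      -(cgf X₀ P₀ t - cgf X₁ P₁ t) := by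
    rw [intervalIntegral.integral_sub
        (intervalIntegrable_deriv_cgf_of_nonpos hX₀ hX₀_nonneg ht le_rfl)
        (intervalIntegrable_deriv_cgf_of_nonpos hX₁ hX₁_nonneg ht le_rfl),
      integral_deriv_cgf_of_nonpos hX₀ hX₀_nonneg ht le_rfl,
      integral_deriv_cgf_of_nonpos hX₁ hX₁_nonneg ht le_rfl, cgf_zero, cgf_zero]
    ring
  rw [← abs_neg, ← integral_sub_eq]
  exact intervalIntegral.abs_integral_le_integral_abs ht

theorem stmt_2_general (hX₀ : AEMeasurable X₀ P₀) (hX₁ : AEMeasurable X₁ P₁)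
    (hX₀_nonneg : 0 ≤ᵐ[P₀] X₀) (hX₁_nonneg : 0 ≤ᵐ[P₁] X₁)
    (hX₀_pos : 0 < P₀[X₀]) (hX₁_pos : 0 < P₁[X₁]) {l : ℝ} (hl : 0 ≤ l) :
    |mgf X₀ P₀ (-l) - mgf X₁ P₁ (-l)| ≤
      ∫ s in (0 : ℝ)..l,
        |P₀[X₀] * sizeBiasedRatio X₀ P₀ s - P₁[X₁] * sizeBiasedRatio X₁ P₁ s| := by
  have neg_l_nonpos : -l ≤ 0 := neg_nonpos.2 hl
  calc |mgf X₀ P₀ (-l) - mgf X₁ P₁ (-l)|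
    _ ≤ |cgf X₀ P₀ (-l) - cgf X₁ P₁ (-l)| :=
      abs_mgf_sub_mgf_le_abs_cgf_sub_cgf hX₀ hX₁ hX₀_nonneg hX₁_nonneg neg_l_nonpos
    _ ≤ ∫ u in -l..0, |deriv (cgf X₀ P₀) u - deriv (cgf X₁ P₁) u| :=
      abs_cgf_sub_cgf_le_integral_abs_deriv hX₀ hX₁ hX₀_nonneg hX₁_nonneg neg_l_nonpos
    _ = ∫ s in (0 : ℝ)..l, |deriv (cgf X₀ P₀) (-s) - deriv (cgf X₁ P₁) (-s)| := by
      rw [intervalIntegral.integral_comp_neg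
        (fun u => |deriv (cgf X₀ P₀) u - deriv (cgf X₁ P₁) u|), neg_zero]
    _ = _ := intervalIntegral.integral_congr_Ioo_of_le hl fun s hs => by
      simp only [integral_mul_sizeBiasedRatio_eq_deriv_cgf hX₀ hX₀_nonneg hX₀_pos hs.1,
        integral_mul_sizeBiasedRatio_eq_deriv_cgf hX₁ hX₁_nonneg hX₁_pos hs.1]

end Comparison

theorem stmt_2 {Ω : Type*} [MeasureSpace Ω] (P : Measure Ω) [IsProbabilityMeasure P]
    (X₀ X₁ : Ω → ℝ) (hX₀ : Measurable X₀) (hX₁ : Measurable X₁)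
    (hX₀_nonneg : ∀ ω, 0 ≤ X₀ ω) (hX₁_nonneg : ∀ ω, 0 ≤ X₁ ω)
    (hX₀_int : Integrable X₀ P) (hX₁_int : Integrable X₁ P)
    (a : ℝ) (ha : 0 < a) (ha₀ : ∫ ω, X₀ ω ∂P = a) (ha₁ : ∫ ω, X₁ ω ∂P = a)
    (F₀ F₁ : ℝ → ℝ)
    (hF₀ : ∀ l : ℝ, F₀ l =
      (∫ x, Real.exp (-l * x) ∂(sizeBiasedLaw (P.map X₀) a)) /
        (∫ ω, Real.exp (-l * X₀ ω) ∂P))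
    (hF₁ : ∀ l : ℝ, F₁ l =
      (∫ x, Real.exp (-l * x) ∂(sizeBiasedLaw (P.map X₁) a)) /
        (∫ ω, Real.exp (-l * X₁ ω) ∂P)) :
    ∀ l : ℝ, 0 ≤ l →
      |(∫ ω, Real.exp (-l * X₀ ω) ∂P) - ∫ ω, Real.exp (-l * X₁ ω) ∂P| ≤
        a * ∫ s in (0:ℝ)..l, |F₀ s - F₁ s| := by
  subst ha₀
  obtain rfl : F₀ = sizeBiasedRatio X₀ P := funext hF₀
  obtain rfl : F₁ = sizeBiasedRatio X₁ P := by rw [← ha₁] at hF₁; exact funext hF₁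
  intro l hl
  have h := stmt_2_general hX₀.aemeasurable hX₁.aemeasurable (.of_forall hX₀_nonneg)
    (.of_forall hX₁_nonneg) ha (ha₁ ▸ ha) hl
  simp only [ha₁, ← mul_sub, abs_mul, abs_of_pos ha, intervalIntegral.integral_const_mul] at h
  exact h
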